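/- Fix positive real numbers α and β with αβ = 4. Define g_α : (0,∞) → ℝ by g_α(t) = 1/(2(2+αt)) for 0 < t ≤ 2/α and g_α(t) = −1/(αt(2+αt)) for t > 2/α. Then: (a) g_α ∈ L¹((0,∞)); (b) ∫₀^∞ e^{iπαmt} g_α(t) dt = 0 for all m ∈ ℤ and ∫₀^∞ e^{−iπβn/t} g_α(t) dt = 0 for all n ∈ ℤ; (c) every f ∈ L¹((0,∞), ℂ) satisfying ∫₀^∞ e^{iπαmt} f(t) dt = 0 for all m ∈ ℤ and ∫₀^∞ e^{−iπβn/t} f(t) dt = 0 for all n ∈ ℤ equals c·g_α almost everywhere on (0,∞) for some constant c ∈ ℂ. -/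

import Mathlib

open MeasureTheory Real

/-- The explicit annihilating density in the critical regime `αβ = 4`. -/
noncomputable def gcrit (α : ℝ) (t : ℝ) : ℝ :=
  if t ≤ 2 / α then 1 / (2 * (2 + α * t)) else -(1 / (α * t * (2 + α * t)))

open scoped ENNReal

/-- The Gauss map `x ↦ {1 / x}` of the continued fraction expansion. -/
noncomputable def gaussMap (x : ℝ) : ℝ := Int.fract x⁻¹

/-- The transfer operator of the Gauss map, on nonnegative extended densities. -/
noncomputable def gaussTransfer (h : ℝ → ℝ≥0∞) (x : ℝ) : ℝ≥0∞ :=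
  ∑' k : ℕ, ENNReal.ofReal (1 / (x + k + 1) ^ 2) * h (x + k + 1)⁻¹

/-- `h` has logarithmic oscillation on `[0, 1]` at most `L` with respect to the distance
`|log (1 + x) - log (1 + y)|`. -/
def LogLipschitz (L : ℝ) (h : ℝ → ℝ≥0∞) : Prop :=
  ∀ x ∈ Set.Icc (0 : ℝ) 1, ∀ y ∈ Set.Icc (0 : ℝ) 1,
    h x ≤ ENNReal.ofReal (exp (L * |log (1 + x) - log (1 + y)|)) * h y

theorem measurable_gaussMap : Measurable gaussMap :=
  measurable_fract.comp measurable_inv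

theorem measurable_gaussTransfer {h : ℝ → ℝ≥0∞} (hh : Measurable h) :
    Measurable (gaussTransfer h) := by
  unfold gaussTransfer
  refine Measurable.tsum fun k => ?_
  fun_prop

theorem abs_log_sub_log_branch_le {x y a : ℝ} (hx : 0 ≤ x) (hy : 0 ≤ y) (ha : 0 ≤ a) :
    |log (1 + (x + a + 1)⁻¹) - log (1 + (y + a + 1)⁻¹)| ≤ |log (1 + x) - log (1 + y)| / 2 := by
  wlog hxy : x ≤ y generalizing x y
  · rw [abs_sub_comm, abs_sub_comm (log (1 + x))]
    exact this hy hx (le_of_not_ge hxy)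
  obtain ⟨d, hd, rfl⟩ : ∃ d, 0 ≤ d ∧ y = x + d := ⟨y - x, by linarith, by ring⟩
  have h1 : log (1 + (x + d + a + 1)⁻¹) ≤ log (1 + (x + a + 1)⁻¹) := by
    apply log_le_log (by positivity)
    gcongr
  have h2 : log (1 + x) ≤ log (1 + (x + d)) := log_le_log (by positivity) (by linarith)
  rw [abs_of_nonneg (by linarith), abs_sub_comm, abs_of_nonneg (by linarith)]
  have h3 : 2 * log (1 + (x + a + 1)⁻¹) + log (1 + x) ≤
      2 * log (1 + (x + d + a + 1)⁻¹) + log (1 + (x + d)) := by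
    have e : ∀ u v : ℝ, 0 < u → 0 < v → 2 * log u + log v = log (u ^ 2 * v) := fun u v hu hv => by
      rw [log_mul (by positivity) (by positivity), log_pow]; norm_num
    rw [e _ _ (by positivity) (by positivity), e _ _ (by positivity) (by positivity)]
    apply log_le_log (by positivity)
    have e1 : 1 + (x + a + 1)⁻¹ = (x + a + 2) / (x + a + 1) := by field_simp; ring
    have e2 : 1 + (x + d + a + 1)⁻¹ = (x + d + a + 2) / (x + d + a + 1) := by field_simp; ring
    rw [e1, e2, div_pow, div_pow, div_mul_eq_mul_div, div_mul_eq_mul_div,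
      div_le_div_iff₀ (by positivity) (by positivity), ← sub_nonneg]
    ring_nf
    positivity
  linarith

theorem inv_sq_le_exp_mul_inv_sq {x y a : ℝ} (hx : 0 ≤ x) (hy : 0 ≤ y) (ha : 0 ≤ a) :
    1 / (x + a + 1) ^ 2 ≤ exp (2 * |log (1 + x) - log (1 + y)|) * (1 / (y + a + 1) ^ 2) := by
  rcases le_total y x with h | h
  · have : 1 / (x + a + 1) ^ 2 ≤ 1 / (y + a + 1) ^ 2 := by gcongr
    refine this.trans (le_mul_of_one_le_left (by positivity) (one_le_exp (by positivity)))
  · have h2 : log (1 + x) ≤ log (1 + y) := log_le_log (by positivity) (by linarith)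
    rw [abs_sub_comm, abs_of_nonneg (by linarith), two_mul, exp_add, exp_sub,
      exp_log (by positivity), exp_log (by positivity)]
    rw [div_mul_div_comm, div_mul_div_comm, div_le_div_iff₀ (by positivity) (by positivity)]
    have : (1 + x) * (y + a + 1) ≤ (1 + y) * (x + a + 1) := by nlinarith
    calc _ = ((1 + x) * (y + a + 1)) ^ 2 := by ring
      _ ≤ ((1 + y) * (x + a + 1)) ^ 2 := by gcongr
      _ = _ := by ring

theorem LogLipschitz.transfer {L : ℝ} {h : ℝ → ℝ≥0∞} (hL : 0 ≤ L) (hh : LogLipschitz L h) :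
    LogLipschitz (L / 2 + 2) (gaussTransfer h) := by
  intro x hx y hy
  unfold gaussTransfer
  rw [← ENNReal.tsum_mul_left]
  refine ENNReal.tsum_le_tsum fun k => ?_
  have hk : (0 : ℝ) ≤ k := k.cast_nonneg
  have mem : ∀ z ∈ Set.Icc (0 : ℝ) 1, (z + k + 1)⁻¹ ∈ Set.Icc (0 : ℝ) 1 := fun z hz => by
    have := hz.1
    exact ⟨by positivity, inv_le_one_of_one_le₀ (by linarith)⟩
  have h1 := ENNReal.ofReal_le_ofReal (inv_sq_le_exp_mul_inv_sq hx.1 hy.1 hk)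
  rw [ENNReal.ofReal_mul (by positivity)] at h1
  have h2 : h (x + k + 1)⁻¹ ≤
      ENNReal.ofReal (exp (L * (|log (1 + x) - log (1 + y)| / 2))) * h (y + k + 1)⁻¹ := by
    refine (hh _ (mem x hx) _ (mem y hy)).trans ?_
    gcongr
    exact abs_log_sub_log_branch_le hx.1 hy.1 hk
  calc _ ≤ _ := mul_le_mul' h1 h2
    _ = _ := by
      rw [mul_mul_mul_comm, ← ENNReal.ofReal_mul (by positivity), ← exp_add]
      congr 4
      ring

theorem lintegral_mul_comp_gaussMap {h φ : ℝ → ℝ≥0∞} (hh : Measurable h) (hφ : Measurable φ) :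
    ∫⁻ x in Set.Ioo (0 : ℝ) 1, h x * φ (gaussMap x) =
      ∫⁻ x in Set.Ioo (0 : ℝ) 1, gaussTransfer h x * φ x := by
  have hmg := measurable_gaussMap
  let ψ : ℕ → ℝ → ℝ := fun k x => (x + k + 1)⁻¹
  have himg : ∀ k, ψ k '' Set.Ico 0 1 = {x | 0 < x ∧ ⌊x⁻¹⌋ = (k : ℤ) + 1} := by
    intro k
    ext z
    simp only [ψ, Set.mem_image, Set.mem_Ico, Set.mem_ofPred_eq, Int.floor_eq_iff]
    push_cast
    constructor
    · rintro ⟨x, ⟨h0, h1⟩, rfl⟩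
      rw [inv_inv]
      exact ⟨by positivity, by linarith, by linarith⟩
    · rintro ⟨h0, h1, h2⟩
      exact ⟨z⁻¹ - k - 1, ⟨by linarith, by linarith⟩, by
        ring_nf; exact inv_inv z⟩
  have hunion : Set.Ioc (0 : ℝ) 1 = ⋃ k, ψ k '' Set.Ico 0 1 := by
    ext z
    simp only [himg, Set.mem_iUnion, Set.mem_ofPred_eq, Set.mem_Ioc]
    constructor
    · rintro ⟨h0, h1⟩
      have h2 : 1 ≤ ⌊z⁻¹⌋ := Int.le_floor.2 (by simpa using (one_le_inv₀ h0).2 h1)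
      exact ⟨(⌊z⁻¹⌋ - 1).toNat, h0, by omega⟩
    · rintro ⟨k, h0, h1⟩
      refine ⟨h0, (one_le_inv₀ h0).1 ?_⟩
      have := Int.floor_le z⁻¹
      rw [h1] at this
      push_cast at this
      have : (0 : ℝ) ≤ k := k.cast_nonneg
      linarith
  have hmeas : ∀ k, MeasurableSet (ψ k '' Set.Ico 0 1) := by
    intro k
    rw [himg]
    exact measurableSet_Ioi.inter
      ((Int.measurable_floor.comp measurable_inv) (measurableSet_singleton _))
  have hdisj : Pairwise (Function.onFun Disjoint fun k => ψ k '' Set.Ico 0 1) := by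
    intro i j hij
    simp only [Function.onFun, himg]
    refine Set.disjoint_left.2 fun z hz hz' => hij ?_
    have := hz.2.symm.trans hz'.2
    omega
  conv_lhs => rw [restrict_Ioo_eq_restrict_Ioc, hunion, lintegral_iUnion hmeas hdisj]
  rw [restrict_Ioo_eq_restrict_Ico]
  simp_rw [gaussTransfer, ← ENNReal.tsum_mul_right]
  rw [lintegral_tsum (fun k => by fun_prop)]
  congr 1
  ext k
  have hk : (0 : ℝ) ≤ k := k.cast_nonneg
  rw [lintegral_image_eq_lintegral_abs_deriv_mul (f' := fun x => -1 / (x + k + 1) ^ 2)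
    measurableSet_Ico]
  · refine setLIntegral_congr_fun measurableSet_Ico fun x hx => ?_
    have hx0 := hx.1
    have e : gaussMap (ψ k x) = x := by
      simp only [gaussMap, ψ, inv_inv]
      have : x + k + 1 = x + ((k + 1 : ℕ) : ℝ) := by push_cast; ring
      rw [this, Int.fract_add_natCast, Int.fract_eq_self.2 ⟨hx.1, hx.2⟩]
    simp only [e]
    rw [neg_div, abs_neg, abs_of_nonneg (by positivity), mul_assoc]
  · intro x hx
    have := hx.1
    exact (((hasDerivAt_id x).add_const (k : ℝ)).add_const (1 : ℝ)).inv
      (by simp only [id]; positivity) |>.hasDerivWithinAt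
  · intro x hx y hy hxy
    have := inv_injective hxy
    linarith

theorem LogLipschitz.exists_iterate {L : ℝ} {h : ℝ → ℝ≥0∞} (hL : 4 ≤ L) (hm : Measurable h)
    (hh : LogLipschitz L h) (n : ℕ) :
    ∃ H : ℝ → ℝ≥0∞, Measurable H ∧ LogLipschitz (4 + (L - 4) / 2 ^ n) H ∧
      ∀ φ : ℝ → ℝ≥0∞, Measurable φ →
        ∫⁻ x in Set.Ioo (0 : ℝ) 1, h x * φ (gaussMap^[n] x) =
          ∫⁻ x in Set.Ioo (0 : ℝ) 1, H x * φ x := by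
  induction n with
  | zero => exact ⟨h, hm, by simpa using hh, fun φ _ => by simp⟩
  | succ n ih =>
    obtain ⟨H, hHm, hHL, hH⟩ := ih
    refine ⟨gaussTransfer H, measurable_gaussTransfer hHm, ?_, fun φ hφ => ?_⟩
    · have h0 : 0 ≤ (L - 4) / 2 ^ n := div_nonneg (by linarith) (by positivity)
      convert hHL.transfer (by linarith) using 1
      rw [pow_succ]; field_simp; ring
    · simp_rw [Function.iterate_succ_apply']
      rw [hH (fun x => φ (gaussMap x)) (hφ.comp measurable_gaussMap),
        lintegral_mul_comp_gaussMap hHm hφ]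

theorem LogLipschitz.lintegral_le {L : ℝ} {H : ℝ → ℝ≥0∞} (hL : L ≤ 5)
    (hH : LogLipschitz L H) {y : ℝ} (hy : y ∈ Set.Icc (0 : ℝ) 1) :
    ∫⁻ x in Set.Ioo (0 : ℝ) 1, H x ≤ 32 * H y := by
  have key : ∀ x ∈ Set.Ioo (0 : ℝ) 1, H x ≤ 32 * H y := by
    intro x hx
    refine (hH x ⟨hx.1.le, hx.2.le⟩ y hy).trans ?_
    gcongr
    have b : ∀ z ∈ Set.Icc (0 : ℝ) 1, 0 ≤ log (1 + z) ∧ log (1 + z) ≤ log 2 := fun z hz =>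
      ⟨log_nonneg (by linarith [hz.1]), log_le_log (by linarith [hz.1]) (by linarith [hz.2])⟩
    have b1 := b x ⟨hx.1.le, hx.2.le⟩
    have b2 := b y hy
    have b3 : |log (1 + x) - log (1 + y)| ≤ log 2 := abs_le.2 ⟨by linarith, by linarith⟩
    have b4 : exp (L * |log (1 + x) - log (1 + y)|) ≤ 32 := by
      calc _ ≤ exp (5 * log 2) := exp_le_exp.2 (mul_le_mul hL b3 (abs_nonneg _) (by norm_num))
        _ = exp (log (2 ^ 5)) := by rw [log_pow]; norm_num
        _ = 32 := by rw [exp_log (by norm_num)]; norm_num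
    calc _ ≤ ENNReal.ofReal 32 := ENNReal.ofReal_le_ofReal b4
      _ = 32 := by simp
  calc _ ≤ ∫⁻ x in Set.Ioo (0 : ℝ) 1, 32 * H y := setLIntegral_mono measurable_const key
    _ = 32 * H y := by simp

theorem LogLipschitz.mono {L M : ℝ} {h : ℝ → ℝ≥0∞} (hh : LogLipschitz L h) (hLM : L ≤ M) :
    LogLipschitz M h := fun x hx y hy => (hh x hx y hy).trans (by gcongr)

/-- Mass of a log-Lipschitz density is eventually spread by the Gauss map, with a uniform
lower bound. -/
theorem LogLipschitz.eventually_le_integral_preimage {L : ℝ} {u : ℝ → ℝ} (hm : Measurable u)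
    (hu0 : ∀ x, 0 ≤ u x) (hui : IntegrableOn u (Set.Ioo 0 1))
    (hu : LogLipschitz L fun x => ENNReal.ofReal (u x)) :
    ∀ᶠ n in Filter.atTop, ∀ P : Set ℝ, MeasurableSet P →
      (∫ x in Set.Ioo (0 : ℝ) 1, u x) / 32 * (volume.restrict (Set.Ioo (0 : ℝ) 1)).real P ≤
        ∫ x in gaussMap^[n] ⁻¹' P, u x ∂(volume.restrict (Set.Ioo (0 : ℝ) 1)) := by
  have hlim : Filter.Tendsto (fun n : ℕ => 4 + (max L 4 - 4) / (2 : ℝ) ^ n) Filter.atTop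
      (nhds (4 + 0)) :=
    (tendsto_const_nhds.div_atTop (tendsto_pow_atTop_atTop_of_one_lt one_lt_two)).const_add 4
  filter_upwards [hlim.eventually (gt_mem_nhds (show (4 : ℝ) + 0 < 5 by norm_num))] with n hn P hP
  have hmn : Measurable gaussMap^[n] := measurable_gaussMap.iterate n
  obtain ⟨H, hHm, hHL, hH⟩ := (hu.mono (le_max_left L 4)).exists_iterate (le_max_right _ _)
    (by fun_prop) n
  have h1 : ENNReal.ofReal (∫ x in Set.Ioo (0 : ℝ) 1, u x) = ∫⁻ x in Set.Ioo (0 : ℝ) 1, H x := by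
    rw [ofReal_integral_eq_lintegral_ofReal hui (Filter.Eventually.of_forall hu0)]
    simpa using hH (fun _ => 1) measurable_const
  have h2 : ENNReal.ofReal
      (∫ x in gaussMap^[n] ⁻¹' P, u x ∂(volume.restrict (Set.Ioo (0 : ℝ) 1))) =
      ∫⁻ x in P, H x ∂(volume.restrict (Set.Ioo (0 : ℝ) 1)) := by
    rw [ofReal_integral_eq_lintegral_ofReal hui.integrableOn (Filter.Eventually.of_forall hu0)]
    have := hH (P.indicator 1) (measurable_one.indicator hP)
    rw [← lintegral_indicator hP, ← lintegral_indicator (hmn hP)]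
    calc _ = ∫⁻ x in Set.Ioo (0 : ℝ) 1, ENNReal.ofReal (u x) * P.indicator 1 (gaussMap^[n] x) := by
          congr with x
          by_cases hx : gaussMap^[n] x ∈ P <;> simp [Set.indicator, hx]
      _ = _ := this
      _ = _ := by
          congr with x
          by_cases hx : x ∈ P <;> simp [hx]
  have hnn : 0 ≤ ∫ x in Set.Ioo (0 : ℝ) 1, u x := integral_nonneg hu0
  rw [← ENNReal.ofReal_le_ofReal_iff (integral_nonneg hu0), h2,
    ENNReal.ofReal_mul (by positivity), ofReal_measureReal, ENNReal.ofReal_div_of_pos (by norm_num),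
    h1, ← setLIntegral_const]
  refine lintegral_mono_ae ?_
  filter_upwards [ae_restrict_of_ae (ae_restrict_mem (measurableSet_Ioo (a := (0 : ℝ)) (b := 1)))]
    with x hx
  refine ENNReal.div_le_of_le_mul ?_
  rw [mul_comm]
  simpa using hHL.lintegral_le hn.le ⟨hx.1.le, hx.2.le⟩

theorem abs_sub_le_two_mul_abs_log_sub_log {x y : ℝ} (hx : x ∈ Set.Icc (0 : ℝ) 1)
    (hy : y ∈ Set.Icc (0 : ℝ) 1) : |x - y| ≤ 2 * |log (1 + x) - log (1 + y)| := by
  wlog hxy : x ≤ y generalizing x y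
  · rw [abs_sub_comm, abs_sub_comm (log (1 + x))]
    exact this hy hx (le_of_not_ge hxy)
  obtain ⟨hx0, hx1⟩ := hx
  obtain ⟨hy0, hy1⟩ := hy
  rw [abs_sub_comm, abs_of_nonneg (by linarith), abs_sub_comm,
    ← log_div (by positivity) (by positivity)]
  have h1 := one_sub_inv_le_log_of_pos (show 0 < (1 + y) / (1 + x) by positivity)
  have h2 : (y - x) / 2 ≤ 1 - ((1 + y) / (1 + x))⁻¹ := by
    rw [inv_div, one_sub_div (by positivity), add_sub_add_left_eq_sub]
    gcongr
    linarith
  linarith [le_abs_self (log ((1 + y) / (1 + x)))]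

theorem logLipschitz_of_lipschitz {u : ℝ → ℝ} {K ε : ℝ} (hK : 0 ≤ K) (hε : 0 < ε)
    (hu : ∀ x, ε ≤ u x)
    (hL : ∀ x ∈ Set.Icc (0 : ℝ) 1, ∀ y ∈ Set.Icc (0 : ℝ) 1, u x - u y ≤ K * |x - y|) :
    LogLipschitz (2 * K / ε) fun x => ENNReal.ofReal (u x) := by
  intro x hx y hy
  rw [← ENNReal.ofReal_mul (exp_nonneg _)]
  apply ENNReal.ofReal_le_ofReal
  set D := |log (1 + x) - log (1 + y)|
  have hD : 0 ≤ D := abs_nonneg _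
  have h1 := hL x hx y hy
  have h2 : |x - y| ≤ 2 * D := abs_sub_le_two_mul_abs_log_sub_log hx hy
  have h3 : K * |x - y| ≤ 2 * K * D := by nlinarith
  have h4 : 2 * K * D ≤ 2 * K / ε * D * u y := by
    calc 2 * K * D = 2 * K / ε * D * ε := by field_simp
      _ ≤ _ := by gcongr; exact hu y
  have h5 := add_one_le_exp (2 * K / ε * D)
  have h6 : 0 ≤ u y := hε.le.trans (hu y)
  nlinarith

theorem exists_logLipschitz_approx {f : ℝ → ℝ} (hf : IntegrableOn f (Set.Ioo 0 1)) {ε : ℝ}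
    (hε : 0 < ε) :
    ∃ u v : ℝ → ℝ, ∃ L : ℝ, Continuous u ∧ Continuous v ∧ (∀ x, 0 ≤ u x) ∧ (∀ x, 0 ≤ v x) ∧
      LogLipschitz L (fun x => ENNReal.ofReal (u x)) ∧
      LogLipschitz L (fun x => ENNReal.ofReal (v x)) ∧
      ∫ x in Set.Ioo (0 : ℝ) 1, |f x - (u x - v x)| ≤ ε ∧
      ∫ x in Set.Ioo (0 : ℝ) 1, (u x + v x) ≤ (∫ x in Set.Ioo (0 : ℝ) 1, |f x|) + 3 * ε := by
  obtain ⟨g, -, hfg, hgc, hgi⟩ := hf.exists_hasCompactSupport_integral_sub_le (half_pos hε)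
  obtain ⟨p, hp⟩ := exists_polynomial_near_of_continuousOn 0 1 g hgc.continuousOn (ε / 2)
    (half_pos hε)
  have intc : ∀ {w : ℝ → ℝ}, Continuous w → IntegrableOn w (Set.Ioo 0 1) := fun hw =>
    (hw.integrableOn_Icc).mono_set Set.Ioo_subset_Icc_self
  have hpc : Continuous fun x => p.eval x := p.continuous
  obtain ⟨K, hK⟩ : ∃ K : ℝ, ∀ x ∈ Set.Icc (0 : ℝ) 1, ‖p.derivative.eval x‖ ≤ K :=
    isCompact_Icc.exists_bound_of_continuousOn p.derivative.continuous.continuousOn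
  have hK0 : 0 ≤ K := (norm_nonneg _).trans (hK 0 (by simp))
  have hlip : ∀ x ∈ Set.Icc (0 : ℝ) 1, ∀ y ∈ Set.Icc (0 : ℝ) 1,
      |p.eval x - p.eval y| ≤ K * |x - y| := fun x hx y hy =>
    (convex_Icc (0 : ℝ) 1).norm_image_sub_le_of_norm_hasDerivWithin_le
      (fun z _ => (p.hasDerivAt z).hasDerivWithinAt) hK hy hx
  have happrox : ∫ x in Set.Ioo (0 : ℝ) 1, |f x - p.eval x| ≤ ε := by
    have hb : ∫ x in Set.Ioo (0 : ℝ) 1, |g x - p.eval x| ≤ ∫ x in Set.Ioo (0 : ℝ) 1, ε / 2 := by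
      refine setIntegral_mono_on (intc (hgc.sub hpc).abs) (intc continuous_const)
        measurableSet_Ioo fun x hx => ?_
      rw [abs_sub_comm]
      exact (hp x ⟨hx.1.le, hx.2.le⟩).le
    have hc : ∫ x in Set.Ioo (0 : ℝ) 1, |f x - p.eval x| ≤
        ∫ x in Set.Ioo (0 : ℝ) 1, (‖f x - g x‖ + |g x - p.eval x|) :=
      integral_mono (hf.sub (intc hpc)).abs
        ((hf.sub hgi).norm.add (intc (hgc.sub hpc).abs)) fun x => abs_sub_le _ _ _
    have hi : IntegrableOn (fun x => ‖f x - g x‖) (Set.Ioo 0 1) := (hf.sub hgi).norm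
    rw [integral_add hi (intc (by fun_prop))] at hc
    simp at hb
    linarith
  refine ⟨fun x => max (p.eval x) 0 + ε, fun x => max (-p.eval x) 0 + ε, 2 * K / ε,
    by fun_prop, by fun_prop, fun x => by positivity, fun x => by positivity,
    logLipschitz_of_lipschitz hK0 hε (fun x => by simp) fun x hx y hy => ?_,
    logLipschitz_of_lipschitz hK0 hε (fun x => by simp) fun x hx y hy => ?_, ?_, ?_⟩
  · have := abs_le.1 (hlip x hx y hy)
    grind
  · have := abs_le.1 (hlip x hx y hy)
    grind
  · convert happrox using 4 with x
    grind
  · have hc : ∫ x in Set.Ioo (0 : ℝ) 1, (max (p.eval x) 0 + ε + (max (-p.eval x) 0 + ε)) ≤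
        ∫ x in Set.Ioo (0 : ℝ) 1, (|f x| + (|f x - p.eval x| + 2 * ε)) := by
      refine integral_mono (intc (by fun_prop))
        (hf.abs.add ((hf.sub (intc hpc)).abs.add (intc continuous_const))) fun x => ?_
      simp only
      grind
    have hi : IntegrableOn (fun x => |f x - p.eval x|) (Set.Ioo 0 1) := (hf.sub (intc hpc)).abs
    have hj : IntegrableOn (fun x => |f x - p.eval x| + 2 * ε) (Set.Ioo 0 1) :=
      hi.add (intc continuous_const)
    rw [integral_add hf.abs hj,
      integral_add hi (intc continuous_const)] at hc
    simp at hc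
    linarith

/-- Ergodicity of the square of the Gauss map, in the form of uniqueness of the invariant
integrable density. -/
theorem ae_eq_zero_of_gaussMap_sq_invariant {f : ℝ → ℝ} (hf : IntegrableOn f (Set.Ioo 0 1))
    (hinv : ∀ P : Set ℝ, MeasurableSet P →
      ∫ x in gaussMap^[2] ⁻¹' P, f x ∂(volume.restrict (Set.Ioo (0 : ℝ) 1)) =
        ∫ x in P, f x ∂(volume.restrict (Set.Ioo (0 : ℝ) 1)))
    (h0 : ∫ x in Set.Ioo (0 : ℝ) 1, f x = 0) :
    f =ᵐ[volume.restrict (Set.Ioo (0 : ℝ) 1)] 0 := by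
  set N := volume.restrict (Set.Ioo (0 : ℝ) 1) with hN
  have hNprob : IsProbabilityMeasure N := ⟨by simp [hN]⟩
  have hτ : ∀ n, Measurable gaussMap^[n] := fun n => measurable_gaussMap.iterate n
  have hiter : ∀ n : ℕ, ∀ P : Set ℝ, MeasurableSet P →
      ∫ x in gaussMap^[2 * n] ⁻¹' P, f x ∂N = ∫ x in P, f x ∂N := by
    intro n
    induction n with
    | zero => intro P _; simp
    | succ n ih =>
      intro P hP
      rw [mul_add, mul_one, Function.iterate_add, Set.preimage_comp, hinv _ (hτ _ hP), ih P hP]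
  have hInt : Integrable f N := hf
  set M := ∫ x, |f x| ∂N with hM
  have hbound : ∀ ε > 0, ∀ P : Set ℝ, MeasurableSet P →
      2 * ∫ x in P, f x ∂N ≤ 31 / 32 * M + 8 * ε := by
    intro ε hε P hP
    obtain ⟨u, v, L, huc, hvc, hu0, hv0, huL, hvL, hfuv, huv⟩ := exists_logLipschitz_approx hf hε
    have intc : ∀ {w : ℝ → ℝ}, Continuous w → Integrable w N := fun hw =>
      (hw.integrableOn_Icc).mono_set Set.Ioo_subset_Icc_self
    have hui := intc huc
    have hvi := intc hvc
    obtain ⟨n, hn⟩ := ((huL.eventually_le_integral_preimage huc.measurable hu0 hui).and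
      (hvL.eventually_le_integral_preimage hvc.measurable hv0 hvi)).exists_forall_of_atTop
    have hnu := (hn (2 * n) (by omega)).1 Pᶜ hP.compl
    have hnv := (hn (2 * n) (by omega)).2 P hP
    rw [← hiter n P hP]
    set Q := gaussMap^[2 * n] ⁻¹' P
    have hQ : MeasurableSet Q := hτ _ hP
    rw [Set.preimage_compl] at hnu
    have hsplit := integral_add_compl hQ hui
    have huvi : Integrable (fun x => u x - v x) N := hui.sub hvi
    have hsub : Integrable (fun x => f x - (u x - v x)) N := hInt.sub huvi
    have h1 : ∫ x in Q, f x ∂N ≤ ε + (∫ x in Q, u x ∂N - ∫ x in Q, v x ∂N) := by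
      rw [← integral_sub hui.integrableOn hvi.integrableOn, ← sub_le_iff_le_add,
        ← integral_sub hInt.integrableOn huvi.integrableOn]
      calc _ ≤ ∫ x in Q, |f x - (u x - v x)| ∂N :=
            integral_mono hsub.integrableOn hsub.abs.integrableOn fun x => le_abs_self _
        _ ≤ ∫ x, |f x - (u x - v x)| ∂N :=
            setIntegral_le_integral hsub.abs (Filter.Eventually.of_forall fun x => abs_nonneg _)
        _ ≤ ε := hfuv
    have h2 : |∫ x, u x ∂N - ∫ x, v x ∂N| ≤ ε := by
      have : ∫ x, (f x - (u x - v x)) ∂N = -(∫ x, u x ∂N - ∫ x, v x ∂N) := by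
        rw [integral_sub hInt huvi, integral_sub hui hvi, h0, zero_sub]
      rw [← abs_neg, ← this]
      exact (abs_integral_le_integral_abs).trans hfuv
    rw [integral_add hui hvi] at huv
    have hPc : N.real P + N.real Pᶜ = 1 := probReal_add_probReal_compl hP
    have hP0 : 0 ≤ N.real P := measureReal_nonneg
    have hP1 : 0 ≤ N.real Pᶜ := measureReal_nonneg
    rw [abs_le] at h2
    set a := ∫ x, u x ∂N
    set b := ∫ x, v x ∂N
    have h3 : ((a + b) / 2 - ε / 2) * N.real P ≤ b * N.real P :=
      mul_le_mul_of_nonneg_right (by linarith) hP0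
    have h4 : ((a + b) / 2 - ε / 2) * N.real Pᶜ ≤ a * N.real Pᶜ :=
      mul_le_mul_of_nonneg_right (by linarith) hP1
    have h5 : ((a + b) / 2 - ε / 2) * N.real P + ((a + b) / 2 - ε / 2) * N.real Pᶜ =
      (a + b) / 2 - ε / 2 := by rw [← mul_add, hPc, mul_one]
    linarith
  have hle : ∀ P : Set ℝ, MeasurableSet P → 2 * ∫ x in P, f x ∂N ≤ 31 / 32 * M := by
    intro P hP
    refine le_of_forall_pos_le_add fun ε hε => ?_
    have := hbound (ε / 8) (by positivity) P hP
    linarith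
  set f' := hf.1.mk f
  have hff' : f =ᵐ[N] f' := hf.1.ae_eq_mk
  have hP : MeasurableSet {x | 0 ≤ f' x} :=
    measurableSet_le measurable_const hf.1.stronglyMeasurable_mk.measurable
  have hMeq : M = 2 * ∫ x in {x | 0 ≤ f' x}, f x ∂N := by
    have e1 := integral_add_compl hP hInt.abs
    have e2 := integral_add_compl hP hInt
    rw [h0] at e2
    have e3 : ∫ x in {x | 0 ≤ f' x}, |f x| ∂N = ∫ x in {x | 0 ≤ f' x}, f x ∂N := by
      refine integral_congr_ae ?_
      filter_upwards [ae_restrict_of_ae hff', ae_restrict_mem hP] with x hx hx'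
      rw [abs_of_nonneg (by rw [hx]; exact hx')]
    have e4 : ∫ x in {x | 0 ≤ f' x}ᶜ, |f x| ∂N = -∫ x in {x | 0 ≤ f' x}ᶜ, f x ∂N := by
      rw [← integral_neg]
      refine integral_congr_ae ?_
      filter_upwards [ae_restrict_of_ae hff', ae_restrict_mem hP.compl] with x hx hx'
      rw [abs_of_nonpos (by rw [hx]; exact (not_le.1 (show ¬ 0 ≤ f' x from hx')).le)]
    linarith
  have hM0 : M = 0 := le_antisymm (by linarith [hle _ hP]) (integral_nonneg fun x => abs_nonneg _)
  have := (integral_eq_zero_iff_of_nonneg (fun x => abs_nonneg _) hInt.abs).1 hM0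
  filter_upwards [this] with x hx
  simpa using hx

theorem integral_continuousMap_comp_mul_eq_zero {X : Type*} [MeasurableSpace X] {μ : Measure X}
    {f : X → ℝ} (hf : Integrable f μ) {g : X → ℝ} (hg : Measurable g)
    (h : ∀ m : ℤ, ∫ x, Complex.exp (2 * π * Complex.I * m * g x) * (f x : ℂ) ∂μ = 0)
    (φ : C(UnitAddCircle, ℂ)) : ∫ x, φ (g x : UnitAddCircle) * (f x : ℂ) ∂μ = 0 := by
  have hG : Measurable fun x => (g x : UnitAddCircle) := AddCircle.measurable_mk'.comp hg
  have hfc : Integrable (fun x => (f x : ℂ)) μ := hf.ofReal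
  have hInt : ∀ ψ : C(UnitAddCircle, ℂ),
      Integrable (fun x => ψ (g x : UnitAddCircle) * (f x : ℂ)) μ := fun ψ =>
    hfc.bdd_mul (ψ.continuous.measurable.comp hG).aestronglyMeasurable
      (Filter.Eventually.of_forall fun x => ψ.norm_coe_le_norm _)
  let Λ : C(UnitAddCircle, ℂ) →ₗ[ℂ] ℂ :=
    { toFun := fun ψ => ∫ x, ψ (g x : UnitAddCircle) * (f x : ℂ) ∂μ
      map_add' := fun ψ χ => by
        rw [← integral_add (hInt ψ) (hInt χ)]
        simp [add_mul]
      map_smul' := fun c ψ => by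
        simp [mul_assoc, integral_const_mul] }
  let Λc : C(UnitAddCircle, ℂ) →L[ℂ] ℂ := Λ.mkContinuous (∫ x, ‖(f x : ℂ)‖ ∂μ) fun ψ => by
    calc ‖∫ x, ψ (g x : UnitAddCircle) * (f x : ℂ) ∂μ‖
        ≤ ∫ x, ‖ψ‖ * ‖(f x : ℂ)‖ ∂μ := by
          refine norm_integral_le_of_norm_le (hfc.norm.const_mul _)
            (Filter.Eventually.of_forall fun x => ?_)
          rw [norm_mul]
          gcongr
          exact ψ.norm_coe_le_norm _
      _ = _ := by rw [integral_const_mul, mul_comm]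
  have hker : (Submodule.span ℂ (Set.range (@fourier 1))).topologicalClosure ≤
      LinearMap.ker (Λc : C(UnitAddCircle, ℂ) →ₗ[ℂ] ℂ) := by
    refine Submodule.topologicalClosure_minimal _ (Submodule.span_le.2 ?_) Λc.isClosed_ker
    rintro _ ⟨m, rfl⟩
    have := h m
    simp only [SetLike.mem_coe, LinearMap.mem_ker]
    change ∫ x, fourier m (g x : UnitAddCircle) * (f x : ℂ) ∂μ = 0
    simpa only [fourier_coe_apply, Complex.ofReal_one, div_one] using this
  rw [span_fourier_closure_eq_top] at hker
  exact hker (Submodule.mem_top (x := φ))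

/-- If all Fourier coefficients of the image of `f μ` under `g` modulo `1` vanish, then `f μ`
vanishes on preimages of periodic sets. -/
theorem setIntegral_fract_preimage_eq_zero {X : Type*} [MeasurableSpace X] {μ : Measure X}
    {f : X → ℝ} (hf : Integrable f μ) {g : X → ℝ} (hg : Measurable g)
    (h : ∀ m : ℤ, ∫ x, Complex.exp (2 * π * Complex.I * m * g x) * (f x : ℂ) ∂μ = 0)
    {E : Set ℝ} (hE : MeasurableSet E) : ∫ x in {x | Int.fract (g x) ∈ E}, f x ∂μ = 0 := by
  have hG : Measurable fun x => (g x : UnitAddCircle) := AddCircle.measurable_mk'.comp hg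
  set G : X → UnitAddCircle := fun x => (g x : UnitAddCircle) with hGdef
  let ν : (X → ℝ) → Measure UnitAddCircle := fun w =>
    (μ.withDensity fun x => ENNReal.ofReal (w x)).map G
  have hfin : ∀ w : X → ℝ, Integrable w μ → IsFiniteMeasure (ν w) := fun w hw => by
    have := isFiniteMeasure_withDensity_ofReal hw.2
    exact Measure.isFiniteMeasure_map _ _
  have hν : ∀ w : X → ℝ, Integrable w μ → ∀ φ : BoundedContinuousFunction UnitAddCircle ℝ,
      ∫ z, φ z ∂(ν w) = ∫ x, max (w x) 0 * φ (G x) ∂μ := fun w hw φ => by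
    rw [integral_map hG.aemeasurable φ.continuous.aestronglyMeasurable,
      integral_withDensity_eq_integral_toReal_smul₀ hw.aemeasurable.ennreal_ofReal (by simp)]
    simp [ENNReal.toReal_ofReal']
  have := hfin f hf
  have := hfin (-f) hf.neg
  have hφf : ∀ φ : BoundedContinuousFunction UnitAddCircle ℝ, ∀ w : X → ℝ, Integrable w μ →
      Integrable (fun x => w x * φ (G x)) μ := fun φ w hw =>
    hw.mul_bdd (φ.continuous.measurable.comp hG).aestronglyMeasurable
      (Filter.Eventually.of_forall fun x => φ.norm_coe_le_norm _)
  have heq : ν f = ν (-f) := by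
    refine ext_of_forall_integral_eq_of_IsFiniteMeasure fun φ => ?_
    rw [hν f hf, hν (-f) hf.neg, ← sub_eq_zero, ← integral_sub (hφf φ _ hf.pos_part)
      (hφf φ _ hf.neg.pos_part)]
    have h1 := integral_continuousMap_comp_mul_eq_zero hf hg h
      ⟨fun z => ((φ z : ℝ) : ℂ), by fun_prop⟩
    simp only [ContinuousMap.coe_mk, ← Complex.ofReal_mul, integral_complex_ofReal,
      Complex.ofReal_eq_zero] at h1
    rw [← h1]
    congr with x
    simp only [Pi.neg_apply]
    rw [← sub_mul, mul_comm]
    congr 1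
    grind
  let E' : Set UnitAddCircle := (fun z => (AddCircle.measurableEquivIco (1 : ℝ) 0 z : ℝ)) ⁻¹' E
  have hE' : MeasurableSet E' :=
    (measurable_subtype_coe.comp (AddCircle.measurableEquivIco (1 : ℝ) 0).measurable) hE
  have hset : {x | Int.fract (g x) ∈ E} = G ⁻¹' E' := by
    ext x
    have : ((AddCircle.equivIco (1 : ℝ) 0 (g x : AddCircle (1 : ℝ)) : ℝ)) = Int.fract (g x) := by
      rw [AddCircle.coe_equivIco_mk_apply]; simp
    change Int.fract (g x) ∈ E ↔ ((AddCircle.equivIco (1 : ℝ) 0 (g x : AddCircle (1 : ℝ)) : ℝ)) ∈ E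
    rw [this]
  have hS : MeasurableSet (G ⁻¹' E') := hG hE'
  have hm : ∀ w : X → ℝ, ν w E' = ∫⁻ x in G ⁻¹' E', ENNReal.ofReal (w x) ∂μ := fun w => by
    rw [Measure.map_apply hG hE', withDensity_apply _ hS]
  have h2 := congrArg (fun ρ => ρ E') heq
  simp only [hm] at h2
  rw [hset, integral_eq_lintegral_pos_part_sub_lintegral_neg_part hf.integrableOn, h2]
  simp

theorem restrict_Ioi_zero_eq_add :
    volume.restrict (Set.Ioi (0 : ℝ)) =
      volume.restrict (Set.Ioo (0 : ℝ) 1) + volume.restrict (Set.Ioi (1 : ℝ)) := by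
  rw [restrict_Ioo_eq_restrict_Ioc, ← Measure.restrict_union (Set.Ioc_disjoint_Ioi le_rfl)
    measurableSet_Ioi, Set.Ioc_union_Ioi_eq_Ioi zero_le_one]

theorem ae_eq_zero_of_fourier_coeff_eq_zero {F : ℝ → ℝ} (hF : IntegrableOn F (Set.Ioi 0))
    (h1 : ∀ m : ℤ, ∫ t in Set.Ioi (0 : ℝ), Complex.exp (2 * π * Complex.I * m * t) * (F t : ℂ) = 0)
    (h2 : ∀ m : ℤ, ∫ t in Set.Ioi (0 : ℝ),
      Complex.exp (2 * π * Complex.I * m * (t⁻¹ : ℝ)) * (F t : ℂ) = 0)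
    (h0 : ∫ t in Set.Ioo (0 : ℝ) 1, F t = 0) :
    F =ᵐ[volume.restrict (Set.Ioi (0 : ℝ))] 0 := by
  set N := volume.restrict (Set.Ioo (0 : ℝ) 1) with hN
  set N' := volume.restrict (Set.Ioi (1 : ℝ)) with hN'
  have hFN : Integrable F N := hF.mono_set Set.Ioo_subset_Ioi_self
  have hFN' : Integrable F N' := hF.mono_set (Set.Ioi_subset_Ioi zero_le_one)
  have hsplit : ∀ S : Set ℝ, ∫ t in S, F t ∂(volume.restrict (Set.Ioi (0 : ℝ))) =
      ∫ t in S, F t ∂N + ∫ t in S, F t ∂N' := fun S => by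
    rw [restrict_Ioi_zero_eq_add, Measure.restrict_add,
      integral_add_measure hFN.integrableOn hFN'.integrableOn]
  have hA : ∀ E : Set ℝ, MeasurableSet E → ∫ t in E, F t ∂N = -∫ t in Int.fract ⁻¹' E, F t ∂N' := by
    intro E hE
    have := (hsplit _).symm.trans (setIntegral_fract_preimage_eq_zero hF measurable_id h1 hE)
    rw [eq_neg_iff_add_eq_zero, ← this]
    congr 1
    refine setIntegral_congr_set ?_
    filter_upwards [ae_restrict_mem measurableSet_Ioo] with t ht
    exact congrArg (· ∈ E) (Int.fract_eq_self.2 ⟨ht.1.le, ht.2⟩).symm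
  have hB : ∀ E : Set ℝ, MeasurableSet E →
      ∫ t in gaussMap ⁻¹' E, F t ∂N = -∫ t in Inv.inv ⁻¹' E, F t ∂N' := by
    intro E hE
    have := (hsplit _).symm.trans (setIntegral_fract_preimage_eq_zero hF measurable_inv h2 hE)
    rw [eq_neg_iff_add_eq_zero, ← this]
    congr 1
    refine setIntegral_congr_set ?_
    filter_upwards [ae_restrict_mem measurableSet_Ioi] with t ht
    have ht : 1 < t := ht
    exact congrArg (· ∈ E) (Int.fract_eq_self.2 ⟨by positivity, inv_lt_one_of_one_lt₀ ht⟩).symm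
  have hzero : F =ᵐ[N] 0 := by
    refine ae_eq_zero_of_gaussMap_sq_invariant hFN (fun P hP => ?_) h0
    rw [hA P hP]
    refine (hB _ (measurable_gaussMap hP)).trans ?_
    congr 3
    ext t
    simp [gaussMap]
  have hzero' : F =ᵐ[N'] 0 := by
    refine hFN'.ae_eq_zero_of_forall_setIntegral_eq_zero fun S hS _ => ?_
    have := hB _ (measurable_inv hS)
    have e : (Inv.inv ⁻¹' (Inv.inv ⁻¹' S) : Set ℝ) = S := by ext; simp
    rw [e, integral_congr_ae (ae_restrict_of_ae hzero)] at this
    simpa using this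
  rw [restrict_Ioi_zero_eq_add]
  exact ae_add_measure_iff.2 ⟨hzero, hzero'⟩

theorem integral_exp_mul_re_eq_zero {X : Type*} [MeasurableSpace X] {μ : Measure X}
    {f : X → ℂ} (hf : Integrable f μ) {g : X → ℝ} (hg : Measurable g)
    (h : ∀ m : ℤ, ∫ x, Complex.exp (2 * π * Complex.I * m * g x) * f x ∂μ = 0) (m : ℤ) :
    ∫ x, Complex.exp (2 * π * Complex.I * m * g x) * ((f x).re : ℂ) ∂μ = 0 := by
  have hexp : ∀ (m : ℤ) (y : ℝ), Complex.exp (2 * π * Complex.I * m * y) =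
      Complex.exp ((2 * π * m * y : ℝ) * Complex.I) := fun m y => by push_cast; ring_nf
  have hInt : Integrable (fun x => Complex.exp (2 * π * Complex.I * m * g x) * f x) μ :=
    hf.bdd_mul (c := 1) (by fun_prop) (Filter.Eventually.of_forall fun x => by
      rw [hexp, Complex.norm_exp_ofReal_mul_I])
  have hInt' : Integrable
      (fun x => Complex.exp (2 * π * Complex.I * (-m : ℤ) * g x) * f x) μ :=
    hf.bdd_mul (c := 1) (by fun_prop) (Filter.Eventually.of_forall fun x => by
      rw [hexp, Complex.norm_exp_ofReal_mul_I])
  have hconj := congrArg (starRingEnd ℂ) (h (-m))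
  rw [← integral_conj, map_zero] at hconj
  have hIntc : Integrable (fun x => (starRingEnd ℂ)
      (Complex.exp (2 * π * Complex.I * (-m : ℤ) * g x) * f x)) μ :=
    Complex.conjLIE.integrable_comp_iff.2 hInt'
  have hsum := integral_add hInt hIntc
  rw [h m, hconj, add_zero] at hsum
  have : ∀ x, Complex.exp (2 * π * Complex.I * m * g x) * ((f x).re : ℂ) = 1 / 2 *
      (Complex.exp (2 * π * Complex.I * m * g x) * f x + (starRingEnd ℂ)
      (Complex.exp (2 * π * Complex.I * (-m : ℤ) * g x) * f x)) := fun x => by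
    rw [Complex.re_eq_add_conj, map_mul, ← Complex.exp_conj]
    simp [Complex.conj_ofNat]
    ring
  simp_rw [this]
  rw [integral_const_mul, hsum, mul_zero]

theorem ae_eq_zero_of_fourier_coeff_eq_zero_complex {F : ℝ → ℂ} (hF : IntegrableOn F (Set.Ioi 0))
    (h1 : ∀ m : ℤ, ∫ t in Set.Ioi (0 : ℝ), Complex.exp (2 * π * Complex.I * m * t) * F t = 0)
    (h2 : ∀ m : ℤ, ∫ t in Set.Ioi (0 : ℝ),
      Complex.exp (2 * π * Complex.I * m * (t⁻¹ : ℝ)) * F t = 0)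
    (h0 : ∫ t in Set.Ioo (0 : ℝ) 1, F t = 0) :
    F =ᵐ[volume.restrict (Set.Ioi (0 : ℝ))] 0 := by
  have main : ∀ c : ℂ, (fun t => (c * F t).re) =ᵐ[volume.restrict (Set.Ioi (0 : ℝ))] 0 := by
    intro c
    have hcF : Integrable (fun t => c * F t) (volume.restrict (Set.Ioi (0 : ℝ))) := hF.const_mul c
    refine ae_eq_zero_of_fourier_coeff_eq_zero hcF.re
      (integral_exp_mul_re_eq_zero hcF measurable_id fun m => ?_)
      (integral_exp_mul_re_eq_zero hcF measurable_inv fun m => ?_) ?_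
    · simp_rw [mul_left_comm _ c, integral_const_mul]
      exact mul_eq_zero_of_right c (h1 m)
    · simp_rw [mul_left_comm _ c, integral_const_mul]
      exact mul_eq_zero_of_right c (h2 m)
    · have hcF' : Integrable (fun t => c * F t) (volume.restrict (Set.Ioo (0 : ℝ) 1)) :=
        hcF.mono_measure (Measure.restrict_mono Set.Ioo_subset_Ioi_self le_rfl)
      have := integral_re (𝕜 := ℂ) hcF'
      simp only [RCLike.re_eq_complex_re] at this
      rw [this, integral_const_mul, h0, mul_zero, Complex.zero_re]
  filter_upwards [main 1, main (-Complex.I)] with t ht ht'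
  exact Complex.ext (by simpa using ht) (by simpa using ht')

theorem integrableOn_gcrit_two : IntegrableOn (gcrit 2) (Set.Ioi 0) := by
  have hm : Measurable (gcrit 2) :=
    Measurable.ite (measurableSet_le measurable_id measurable_const) (by fun_prop) (by fun_prop)
  refine (integrable_inv_one_add_sq.integrableOn (s := Set.Ioi 0)).mono' hm.aestronglyMeasurable ?_
  filter_upwards [ae_restrict_mem measurableSet_Ioi] with t ht
  have ht : 0 < t := ht
  rw [Real.norm_eq_abs, gcrit, inv_eq_one_div]
  split_ifs with h
  · rw [abs_of_nonneg (by positivity)]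
    gcongr
    norm_num at h
    nlinarith
  · rw [abs_neg, abs_of_nonneg (by positivity)]
    gcongr
    norm_num at h
    nlinarith

theorem integral_periodic_mul_gcrit_two_eq_zero {φ : ℝ → ℂ} (hφ : Continuous φ)
    (hper : Function.Periodic φ 1) (hφ1 : ∀ t, ‖φ t‖ ≤ 1) :
    ∫ t in Set.Ioi (0 : ℝ), φ t * (gcrit 2 t : ℂ) = 0 := by
  have hInt : IntegrableOn (fun t => φ t * (gcrit 2 t : ℂ)) (Set.Ioi 0) :=
    (integrableOn_gcrit_two.ofReal (𝕜 := ℂ)).bdd_mul (c := 1) hφ.aestronglyMeasurable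
      (Filter.Eventually.of_forall hφ1)
  let ψ : ℝ → ℂ := fun t => φ t / t
  have hψc : ∀ a b : ℝ, 0 < a → 0 < b → IntervalIntegrable ψ volume a b := fun a b ha hb => by
    refine ContinuousOn.intervalIntegrable fun t ht => ?_
    have : (t : ℂ) ≠ 0 := by
      have : 0 < t := (lt_min ha hb).trans_le ht.1
      exact_mod_cast this.ne'
    exact (hφ.continuousAt.div Complex.continuous_ofReal.continuousAt this).continuousWithinAt
  have hψ1 : ∀ t, 0 < t → ψ (t + 1) = φ t / (1 + t) := fun t _ => by
    simp only [ψ, hper t]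
    push_cast
    rw [add_comm]
  have htail : ∫ t in Set.Ioi (1 : ℝ), φ t * (gcrit 2 t : ℂ) =
      -(1 / 4) * ∫ t in (1 : ℝ)..2, ψ t := by
    have hlim := intervalIntegral_tendsto_integral_Ioi 1
      (hInt.mono_set (Set.Ioi_subset_Ioi zero_le_one)) Filter.tendsto_id
    refine tendsto_nhds_unique hlim ?_
    have h1 : Filter.Tendsto (fun R : ℝ => ∫ t in R..R + 1, ψ t) Filter.atTop (nhds 0) := by
      refine squeeze_zero_norm' ?_ tendsto_inv_atTop_zero
      filter_upwards [Filter.eventually_gt_atTop 0] with R hR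
      have := intervalIntegral.norm_integral_le_of_norm_le_const (a := R) (b := R + 1) (f := ψ)
        (C := R⁻¹) fun t ht => by
          rw [Set.uIoc_of_le (by linarith)] at ht
          have ht0 : 0 < t := hR.trans ht.1
          simp only [ψ, norm_div, Complex.norm_real, Real.norm_eq_abs, abs_of_pos ht0]
          rw [inv_eq_one_div]
          exact div_le_div₀ zero_le_one (hφ1 t) hR ht.1.le
      simpa using this
    have h2 := (h1.const_sub (∫ t in (1 : ℝ)..2, ψ t)).const_mul (-(1 / 4) : ℂ)
    rw [sub_zero] at h2
    refine h2.congr' ?_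
    filter_upwards [Filter.eventually_ge_atTop 1] with R hR
    have h4 : (∫ t in (1 : ℝ)..2, ψ t) - ∫ t in R..R + 1, ψ t =
        (∫ t in (1 : ℝ)..R, ψ t) - ∫ t in (1 : ℝ)..R, ψ (t + 1) := by
      rw [intervalIntegral.integral_comp_add_right, show (1 : ℝ) + 1 = 2 by norm_num]
      exact intervalIntegral.integral_interval_sub_interval_comm
        (hψc _ _ (by norm_num) (by norm_num))
        (hψc _ _ (by linarith) (by linarith)) (hψc _ _ (by linarith) (by linarith))
    have h5 : IntervalIntegrable (fun t => ψ (t + 1)) volume 1 R := by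
      have := (hψc 2 (R + 1) (by norm_num) (by linarith)).comp_add_right 1
      convert this using 1 <;> ring
    rw [h4, ← intervalIntegral.integral_sub (hψc _ _ (by norm_num) (by linarith)) h5,
      ← intervalIntegral.integral_const_mul]
    simp only [id]
    refine intervalIntegral.integral_congr_ae (Filter.Eventually.of_forall fun t ht => ?_)
    rw [Set.uIoc_of_le hR] at ht
    have ht0 : 0 < t := one_pos.trans ht.1
    have hn : ¬ t ≤ 2 / 2 := by norm_num; exact ht.1
    rw [hψ1 t ht0, gcrit, if_neg hn]
    have e1 : (t : ℂ) ≠ 0 := by exact_mod_cast ht0.ne'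
    have e2 : (1 + t : ℂ) ≠ 0 := by exact_mod_cast (by positivity : 1 + t ≠ 0)
    have e3 : (2 + 2 * t : ℂ) = 2 * (1 + t) := by ring
    simp only [ψ]
    push_cast
    rw [e3]
    field_simp
    ring
  have hhead : ∫ t in Set.Ioc (0 : ℝ) 1, φ t * (gcrit 2 t : ℂ) =
      1 / 4 * ∫ t in (1 : ℝ)..2, ψ t := by
    have e : ∫ t in (1 : ℝ)..2, ψ t = ∫ t in (0 : ℝ)..1, ψ (t + 1) := by
      rw [intervalIntegral.integral_comp_add_right]; norm_num
    rw [e, intervalIntegral.integral_of_le zero_le_one, ← integral_const_mul]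
    refine setIntegral_congr_fun measurableSet_Ioc fun t ht => ?_
    have hn : t ≤ 2 / 2 := by norm_num; exact ht.2
    have e2 : (1 + t : ℂ) ≠ 0 := by exact_mod_cast (by linarith [ht.1] : 1 + t ≠ 0)
    have e3 : (2 + 2 * t : ℂ) = 2 * (1 + t) := by ring
    simp only [hψ1 t ht.1, gcrit, if_pos hn]
    push_cast
    rw [e3]
    field_simp
    norm_num
  rw [← Set.Ioc_union_Ioi_eq_Ioi zero_le_one, setIntegral_union (Set.Ioc_disjoint_Ioi le_rfl)
    measurableSet_Ioi (hInt.mono_set Set.Ioc_subset_Ioi_self)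
    (hInt.mono_set (Set.Ioi_subset_Ioi zero_le_one)), hhead, htail]
  ring

theorem integral_exp_mul_gcrit_two (m : ℤ) :
    ∫ t in Set.Ioi (0 : ℝ), Complex.exp (2 * π * Complex.I * m * t) * (gcrit 2 t : ℂ) = 0 := by
  refine integral_periodic_mul_gcrit_two_eq_zero (by fun_prop) (fun t => ?_) fun t => ?_
  · rw [Complex.exp_eq_exp_iff_exists_int]
    exact ⟨m, by push_cast; ring⟩
  · have : (2 * π * Complex.I * m * t : ℂ) = (2 * π * m * t : ℝ) * Complex.I := by push_cast; ring
    rw [this, Complex.norm_exp_ofReal_mul_I]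

theorem integral_exp_inv_mul_gcrit_two (m : ℤ) :
    ∫ t in Set.Ioi (0 : ℝ),
      Complex.exp (2 * π * Complex.I * m * (t⁻¹ : ℝ)) * (gcrit 2 t : ℂ) = 0 := by
  rw [← integral_comp_rpow_Ioi _ (show (-1 : ℝ) ≠ 0 by norm_num), ← neg_eq_zero, ← integral_neg,
    ← integral_exp_mul_gcrit_two m]
  refine integral_congr_ae ?_
  filter_upwards [ae_restrict_mem measurableSet_Ioi,
    ae_restrict_of_ae (Measure.ae_ne volume (1 : ℝ))] with t ht ht1
  have ht : 0 < t := ht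
  rw [Real.rpow_neg_one, inv_inv, show (-1 - 1 : ℝ) = -(2 : ℕ) by norm_num, Real.rpow_neg ht.le,
    Real.rpow_natCast]
  have key : (t ^ 2)⁻¹ * gcrit 2 t⁻¹ = -gcrit 2 t := by
    simp only [gcrit, div_self (two_ne_zero (α := ℝ))]
    rcases lt_or_gt_of_ne ht1 with h | h
    · rw [if_pos h.le, if_neg (not_le.2 ((one_lt_inv₀ ht).2 h))]
      field_simp
      ring
    · rw [if_neg (not_le.2 h), if_pos (inv_le_one_of_one_le₀ h.le)]
      field_simp
      ring
  rw [abs_neg, abs_one, one_mul, Complex.real_smul, mul_left_comm, ← Complex.ofReal_mul, key]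
  push_cast
  ring

theorem exists_eq_mul_gcrit_two {f : ℝ → ℂ} (hf : IntegrableOn f (Set.Ioi 0))
    (h1 : ∀ m : ℤ, ∫ t in Set.Ioi (0 : ℝ), Complex.exp (2 * π * Complex.I * m * t) * f t = 0)
    (h2 : ∀ m : ℤ, ∫ t in Set.Ioi (0 : ℝ),
      Complex.exp (2 * π * Complex.I * m * (t⁻¹ : ℝ)) * f t = 0) :
    ∃ c : ℂ, ∀ᵐ t ∂(volume.restrict (Set.Ioi (0 : ℝ))), f t = c * gcrit 2 t := by
  have hgi : IntegrableOn (fun t => (gcrit 2 t : ℂ)) (Set.Ioi 0) := integrableOn_gcrit_two.ofReal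
  have hpos : 0 < ∫ t in Set.Ioo (0 : ℝ) 1, gcrit 2 t := by
    have hge : ∫ t in Set.Ioo (0 : ℝ) 1, (1 / 8 : ℝ) ≤ ∫ t in Set.Ioo (0 : ℝ) 1, gcrit 2 t := by
      refine setIntegral_mono_on (by simp) (integrableOn_gcrit_two.mono_set Set.Ioo_subset_Ioi_self)
        measurableSet_Ioo fun t ht => ?_
      have hn : t ≤ 2 / 2 := by norm_num; exact ht.2.le
      rw [gcrit, if_pos hn]
      have := ht.1
      gcongr
      linarith [ht.2]
    simp at hge
    linarith
  set A : ℂ := ∫ t in Set.Ioo (0 : ℝ) 1, (gcrit 2 t : ℂ) with hA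
  have hA0 : A ≠ 0 := by
    rw [hA, integral_complex_ofReal]
    exact_mod_cast hpos.ne'
  set c : ℂ := (∫ t in Set.Ioo (0 : ℝ) 1, f t) / A with hc
  have hexp : ∀ (m : ℤ) (y : ℝ), ‖Complex.exp (2 * π * Complex.I * m * y)‖ ≤ 1 := fun m y => by
    have : (2 * π * Complex.I * m * y : ℂ) = (2 * π * m * y : ℝ) * Complex.I := by push_cast; ring
    rw [this, Complex.norm_exp_ofReal_mul_I]
  have hsub : ∀ (m : ℤ) (q : ℝ → ℝ), Measurable q →
      ∫ t in Set.Ioi (0 : ℝ), Complex.exp (2 * π * Complex.I * m * q t) * f t = 0 →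
      ∫ t in Set.Ioi (0 : ℝ), Complex.exp (2 * π * Complex.I * m * q t) * (gcrit 2 t : ℂ) = 0 →
      ∫ t in Set.Ioi (0 : ℝ),
        Complex.exp (2 * π * Complex.I * m * q t) * (f t - c * gcrit 2 t) = 0 := by
    intro m q hq e1 e2
    have i1 : Integrable (fun t => Complex.exp (2 * π * Complex.I * m * q t) * f t)
        (volume.restrict (Set.Ioi 0)) :=
      hf.bdd_mul (c := 1) (by fun_prop) (Filter.Eventually.of_forall fun t => hexp m (q t))
    have i2 : Integrable (fun t => Complex.exp (2 * π * Complex.I * m * q t) * (gcrit 2 t : ℂ))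
        (volume.restrict (Set.Ioi 0)) :=
      hgi.bdd_mul (c := 1) (by fun_prop) (Filter.Eventually.of_forall fun t => hexp m (q t))
    simp_rw [mul_sub, mul_left_comm _ c]
    rw [integral_sub i1 (i2.const_mul c), integral_const_mul, e1, e2, mul_zero, sub_zero]
  have hzero := ae_eq_zero_of_fourier_coeff_eq_zero_complex
    (F := fun t => f t - c * gcrit 2 t) (hf.sub (hgi.const_mul c))
    (fun m => hsub m id measurable_id (h1 m) (integral_exp_mul_gcrit_two m))
    (fun m => hsub m Inv.inv measurable_inv (h2 m) (integral_exp_inv_mul_gcrit_two m)) (by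
      have i1 : Integrable f (volume.restrict (Set.Ioo (0 : ℝ) 1)) :=
        hf.mono_set Set.Ioo_subset_Ioi_self
      have i2 : Integrable (fun t => (gcrit 2 t : ℂ)) (volume.restrict (Set.Ioo (0 : ℝ) 1)) :=
        hgi.mono_set Set.Ioo_subset_Ioi_self
      rw [integral_sub i1 (i2.const_mul c), integral_const_mul, ← hA, hc, div_mul_cancel₀ _ hA0,
        sub_self])
  exact ⟨c, by filter_upwards [hzero] with t ht using sub_eq_zero.1 ht⟩

theorem gcrit_eq_gcrit_two {α : ℝ} (hα : 0 < α) (t : ℝ) : gcrit α t = gcrit 2 (α / 2 * t) := by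
  have h : t ≤ 2 / α ↔ α / 2 * t ≤ 2 / 2 := by
    rw [le_div_iff₀ hα, div_self two_ne_zero]
    constructor <;> intro h <;> linarith
  simp only [gcrit, h]
  ring_nf

/-- Critical regime `αβ = 4` for one branch of the hyperbola: the space of
annihilating `L¹` densities is exactly one-dimensional, spanned by `gcrit α`. -/
theorem stmt_2 (α β : ℝ) (hα : 0 < α) (hβ : 0 < β) (hcrit : α * β = 4) :
    IntegrableOn (gcrit α) (Set.Ioi 0) ∧
    (∀ m : ℤ, ∫ t in Set.Ioi (0:ℝ),
        Complex.exp (Complex.I * π * α * m * t) * (gcrit α t : ℂ) = 0) ∧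
    (∀ n : ℤ, ∫ t in Set.Ioi (0:ℝ),
        Complex.exp (-(Complex.I * π * β * n) / t) * (gcrit α t : ℂ) = 0) ∧
    (∀ f : ℝ → ℂ, IntegrableOn f (Set.Ioi 0) →
      (∀ m : ℤ, ∫ t in Set.Ioi (0:ℝ),
          Complex.exp (Complex.I * π * α * m * t) * f t = 0) →
      (∀ n : ℤ, ∫ t in Set.Ioi (0:ℝ),
          Complex.exp (-(Complex.I * π * β * n) / t) * f t = 0) →
      ∃ c : ℂ, ∀ᵐ t ∂(volume.restrict (Set.Ioi (0:ℝ))), f t = c * gcrit α t) := by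
  have ha : 0 < α / 2 := by positivity
  have hαc : (α : ℂ) ≠ 0 := by exact_mod_cast hα.ne'
  have hβα : (β : ℂ) = 4 / α := by
    rw [eq_div_iff hαc, mul_comm]
    exact_mod_cast hcrit
  have hscale : ∀ K : ℝ → ℂ, ∫ t in Set.Ioi (0 : ℝ), K (α / 2 * t) = 0 ↔
      ∫ t in Set.Ioi (0 : ℝ), K t = 0 := fun K => by
    rw [integral_comp_mul_left_Ioi K 0 ha, mul_zero, smul_eq_zero_iff_right (inv_ne_zero ha.ne')]
  have e1 : ∀ (m : ℤ) (t : ℝ), Complex.exp (Complex.I * π * α * m * t) =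
      Complex.exp (2 * π * Complex.I * m * (α / 2 * t : ℝ)) := fun m t => by
    congr 1
    push_cast
    ring
  have e2 : ∀ (n : ℤ) (t : ℝ), Complex.exp (-(Complex.I * π * β * n) / t) =
      Complex.exp (2 * π * Complex.I * (-n : ℤ) * ((α / 2 * t)⁻¹ : ℝ)) := fun n t => by
    congr 1
    push_cast
    rw [hβα, mul_inv]
    field_simp
    ring
  refine ⟨?_, fun m => ?_, fun n => ?_, fun f hf h1 h2 => ?_⟩
  · simp_rw [funext (gcrit_eq_gcrit_two hα)]
    rw [integrableOn_Ioi_comp_mul_left_iff (gcrit 2) 0 ha, mul_zero]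
    exact integrableOn_gcrit_two
  · simp_rw [e1, gcrit_eq_gcrit_two hα]
    exact (hscale fun s => Complex.exp (2 * π * Complex.I * m * s) * (gcrit 2 s : ℂ)).2
      (integral_exp_mul_gcrit_two m)
  · simp_rw [e2, gcrit_eq_gcrit_two hα]
    exact (hscale fun s =>
      Complex.exp (2 * π * Complex.I * (-n : ℤ) * (s⁻¹ : ℝ)) * (gcrit 2 s : ℂ)).2
      (integral_exp_inv_mul_gcrit_two (-n))
  · have hinv : ∀ t, (α / 2)⁻¹ * (α / 2 * t) = t := fun t => inv_mul_cancel_left₀ ha.ne' t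
    obtain ⟨c, hc⟩ := exists_eq_mul_gcrit_two (f := fun s => f ((α / 2)⁻¹ * s))
      (by rwa [integrableOn_Ioi_comp_mul_left_iff f 0 (inv_pos.2 ha), mul_zero])
      (fun m => by
        rw [← hscale]
        simpa only [hinv, e1] using h1 m)
      (fun m => by
        rw [← hscale]
        simpa only [hinv, e2, neg_neg] using h2 (-m))
    refine ⟨c, ?_⟩
    rw [ae_restrict_iff' measurableSet_Ioi] at hc ⊢
    have hq : Measure.QuasiMeasurePreserving (fun t : ℝ => α / 2 * t) volume volume :=
      ⟨by fun_prop, by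
        rw [Real.map_volume_mul_left ha.ne']
        exact Measure.smul_absolutelyContinuous⟩
    filter_upwards [hq.ae hc] with t ht ht0
    have := ht (mul_pos ha ht0)
    rwa [hinv, ← gcrit_eq_gcrit_two hα] at this
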